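/- arXiv:1208.1075 — 2 statements merged into one kernel-verified Lean document; each statement's English description precedes it below -/
import Mathlib

section
/- For every nonnegative integer n, the number of Motzkin n-paths equals the number of permutations of length n+1 that avoid 132 and avoid the hatted pattern 21̂3; that is, there is a bijection between Motzkin n-paths and S_{n+1}(132, 21̂3). -/
/-- `π` avoids the pattern 132: no subsequence `π_a π_b π_c` (`a < b < c`) satisfies
`π_a < π_c < π_b`. -/
def Avoids132 {n : ℕ} (π : Equiv.Perm (Fin n)) : Prop :=
  ¬ ∃ a b c : Fin n, a < b ∧ b < c ∧ π a < π c ∧ π c < π b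


/-- `g` is an occurrence of the pattern `τ` in `π`: the indices `g a` are increasing and the
subsequence `π (g 0), …, π (g k)` is order-isomorphic to (i.e. has reduction) `τ`. -/
def IsOcc {k n : ℕ} (τ : Equiv.Perm (Fin k)) (π : Equiv.Perm (Fin n)) (g : Fin k → Fin n) : Prop :=
  StrictMono g ∧ ∀ a b : Fin k, τ a < τ b ↔ π (g a) < π (g b)

/-- `π` avoids the hatted pattern `τ̂_(i)` (the pattern `τ ∈ S_{k+1}` with its `i`-th entry
marked): every `k`-element subsequence of `π` whose reduction is `red(τ∖τ_i)` (which is encoded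
by the order-isomorphism condition with `τ ∘ i.succAbove`) can be extended, by adjoining one
further entry of `π` at some position, to a `(k+1)`-element subsequence with reduction `τ`. -/
def AvoidsHat {k n : ℕ} (τ : Equiv.Perm (Fin (k + 1))) (i : Fin (k + 1))
    (π : Equiv.Perm (Fin n)) : Prop :=
  ∀ g : Fin k → Fin n, StrictMono g →
    (∀ a b : Fin k, τ (i.succAbove a) < τ (i.succAbove b) ↔ π (g a) < π (g b)) →
    ∃ h : Fin (k + 1) → Fin n, IsOcc τ π h ∧ Set.range g ⊆ Set.range h

/-- `w` is a Motzkin `n`-path: a word of length `n` over the alphabet `{u, d, f}`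
(`some true` = up, `some false` = down, `none` = flat) in which every prefix contains at least
as many `u`'s as `d`'s and the total number of `u`'s equals the total number of `d`'s. -/
def IsMotzkinWord (n : ℕ) (w : List (Option Bool)) : Prop :=
  w.length = n ∧
    (∀ p : ℕ, (w.take p).count (some false) ≤ (w.take p).count (some true)) ∧
    w.count (some true) = w.count (some false)

/-! ### Motzkin words by height -/

/-- Word starting at height `h`, staying nonnegative, ending at height `0`. -/
def VW : ℕ → List (Option Bool) → Prop
  | h, [] => h = 0
  | h, none :: w => VW h w
  | h, some true :: w => VW (h + 1) w
  | 0, some false :: _ => False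
  | h + 1, some false :: w => VW h w

theorem vw_iff (w : List (Option Bool)) : ∀ h : ℕ, VW h w ↔
    (∀ p : ℕ, (w.take p).count (some false) ≤ h + (w.take p).count (some true)) ∧
    h + w.count (some true) = w.count (some false) := by
  induction w with
  | nil => intro h; simp [VW]
  | cons s w ih =>
    intro h
    have key : ∀ P : ℕ → Prop, (∀ p, P p) ↔ P 0 ∧ ∀ p, P (p + 1) := by
      intro P
      exact ⟨fun H => ⟨H 0, fun p => H _⟩, fun H p => by cases p; exact H.1; exact H.2 _⟩
    rw [key]
    match s with
    | none => simp [VW, ih]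
    | some true =>
      simp only [VW, ih]
      simp
      constructor
      · rintro ⟨a, b⟩
        exact ⟨fun p => by have := a p; omega, by omega⟩
      · rintro ⟨a, b⟩
        exact ⟨fun p => by have := a p; omega, by omega⟩
    | some false =>
      cases h with
      | zero =>
        simp only [VW]
        simp
        intro a
        have := a 0
        simp at this
      | succ h =>
        simp only [VW, ih]
        simp
        constructor
        · rintro ⟨a, b⟩
          exact ⟨fun p => by have := a p; omega, by omega⟩
        · rintro ⟨a, b⟩
          exact ⟨fun p => by have := a p; omega, by omega⟩

theorem motz_iff (n : ℕ) (w : List (Option Bool)) :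
    IsMotzkinWord n w ↔ w.length = n ∧ VW 0 w := by
  rw [vw_iff, IsMotzkinWord]; simp

theorem vw_append (a b : List (Option Bool)) : ∀ j k : ℕ, VW j a →
    (VW (j + k) (a ++ b) ↔ VW k b) := by
  induction a with
  | nil => intro j k h; simp [VW] at h; simp [h]
  | cons s a ih =>
    intro j k h
    match s, j with
    | none, j => exact ih j k h
    | some true, j =>
      have := ih (j + 1) k h
      rw [← this]; simp only [List.cons_append, VW]; rw [Nat.add_right_comm]
    | some false, 0 => exact absurd h (by simp [VW])
    | some false, j + 1 =>
      have := ih j k h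
      rw [← this, Nat.add_right_comm]; simp only [List.cons_append, VW]

theorem vw_split (N : ℕ) : ∀ (w : List (Option Bool)) (h : ℕ), w.length ≤ N → VW (h + 1) w →
    ∃ a b, w = a ++ some false :: b ∧ VW 0 a ∧ VW h b := by
  induction N with
  | zero =>
    intro w h hl hv
    have : w = [] := by simpa using hl
    subst this; simp [VW] at hv
  | succ N ih =>
    intro w h hl hv
    match w with
    | [] => simp [VW] at hv
    | none :: w =>
      obtain ⟨a, b, rfl, ha, hb⟩ := ih w h (by simpa using hl) hv
      exact ⟨none :: a, b, rfl, ha, hb⟩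
    | some false :: w => exact ⟨[], w, rfl, rfl, hv⟩
    | some true :: w =>
      obtain ⟨a, b, rfl, ha, hb⟩ := ih w (h + 1) (by simpa using hl) hv
      obtain ⟨a', b', rfl, ha', hb'⟩ := ih b h (by simp at hl; omega) hb
      refine ⟨some true :: (a ++ some false :: a'), b', by simp, ?_, hb'⟩
      exact (vw_append a (some false :: a') 0 1 ha).2 ha'

theorem vw_unique (a : List (Option Bool)) : ∀ (j : ℕ) (a' b b' : List (Option Bool)),
    VW j a → VW j a' → a ++ some false :: b = a' ++ some false :: b' → a = a' ∧ b = b' := by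
  induction a with
  | nil =>
    intro j a' b b' h h' e
    simp only [VW] at h
    subst h
    cases a' with
    | nil => simpa using e
    | cons s a' =>
      simp at e
      rw [← e.1] at h'
      exact absurd h' (by simp [VW])
  | cons s a ih =>
    intro j a' b b' h h' e
    cases a' with
    | nil =>
      simp only [VW] at h'
      subst h'
      simp at e
      rw [e.1] at h
      exact absurd h (by simp [VW])
    | cons s' a' =>
      simp only [List.cons_append, List.cons.injEq] at e
      obtain ⟨rfl, e⟩ := e
      have : a = a' ∧ b = b' := by
        match s, j with
        | none, j => exact ih j a' b b' h h' e
        | some true, j => exact ih (j + 1) a' b b' h h' e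
        | some false, 0 => exact absurd h (by simp [VW])
        | some false, j + 1 => exact ih j a' b b' h h' e
      exact ⟨by rw [this.1], this.2⟩

/-! ### Binary trees -/

inductive BT where
  | nil : BT
  | node : BT → BT → BT

namespace BT

def size : BT → ℕ
  | nil => 0
  | node l r => l.size + r.size + 1

/-- `nil`, or a tree with nonempty right subtree. -/
def Ok : BT → Prop
  | nil => True
  | node _ r => r ≠ nil

def Good : BT → Prop
  | nil => True
  | node l r => l.Good ∧ r.Good ∧ l.Ok

theorem size_pos {t : BT} (h : t ≠ nil) : 0 < t.size := by
  cases t with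
  | nil => exact absurd rfl h
  | node l r => simp [size]

/-- The Motzkin word of a (good nonempty) tree. -/
def word : BT → List (Option Bool)
  | nil => []
  | node nil nil => []
  | node nil (node l r) => none :: word (node l r)
  | node (node l1 r1) r => some true :: (word r1 ++ some false :: word (node l1 r))
termination_by t => t.size
decreasing_by all_goals (simp [size]; try omega)

theorem word_spec (N : ℕ) : ∀ t : BT, t.size ≤ N → t ≠ nil → t.Good →
    VW 0 t.word ∧ t.word.length + 1 = t.size := by
  induction N with
  | zero => intro t h ht; have := size_pos ht; omega
  | succ N ih =>
    intro t h ht hg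
    match t with
    | nil => exact absurd rfl ht
    | node nil nil => simp [word, VW, size]
    | node nil (node l r) =>
      have := ih (node l r) (by simp [size] at h ⊢; omega) (by simp) hg.2.1
      simp only [word, VW]
      refine ⟨this.1, ?_⟩
      simp [size] at this ⊢
      omega
    | node (node l1 r1) r =>
      obtain ⟨⟨h1, h2, h3⟩, h4, h5⟩ := hg
      have A := ih r1 (by simp [size] at h ⊢; omega) h5 h2
      have B := ih (node l1 r) (by simp [size] at h ⊢; omega) (by simp) ⟨h1, h4, h3⟩
      simp only [word, VW]
      refine ⟨(vw_append _ _ 0 1 A.1).2 B.1, ?_⟩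
      simp [size] at A B ⊢
      omega

theorem word_inj (N : ℕ) : ∀ t t' : BT, t.size ≤ N → t ≠ nil → t' ≠ nil → t.Good → t'.Good →
    t.word = t'.word → t = t' := by
  induction N with
  | zero => intro t t' h ht; have := size_pos ht; omega
  | succ N ih =>
    intro t t' h ht ht' hg hg' e
    match t, t' with
    | nil, _ => exact absurd rfl ht
    | node _ _, nil => exact absurd rfl ht'
    | node nil nil, node nil nil => rfl
    | node nil nil, node nil (node l r) => simp [word] at e
    | node nil nil, node (node l1 r1) r => simp [word] at e
    | node nil (node l r), node nil nil => simp [word] at e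
    | node (node l1 r1) r, node nil nil => simp [word] at e
    | node nil (node l r), node (node _ _) _ => simp [word] at e
    | node (node _ _) _, node nil (node l r) => simp [word] at e
    | node nil (node l r), node nil (node l' r') =>
      rw [word, word] at e
      have := ih (node l r) (node l' r') (by simp [size] at h ⊢; omega) (by simp) (by simp)
        hg.2.1 hg'.2.1 (List.cons.inj e).2
      rw [this]
    | node (node l1 r1) r, node (node l1' r1') r' =>
      obtain ⟨⟨h1, h2, h3⟩, h4, h5⟩ := hg
      obtain ⟨⟨h1', h2', h3'⟩, h4', h5'⟩ := hg'
      rw [word, word] at e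
      have := vw_unique _ 0 _ _ _ (word_spec _ r1 le_rfl h5 h2).1
        (word_spec _ r1' le_rfl h5' h2').1 (List.cons.inj e).2
      have A := ih r1 r1' (by simp [size] at h ⊢; omega) h5 h5' h2 h2' this.1
      have B := ih (node l1 r) (node l1' r') (by simp [size] at h ⊢; omega) (by simp) (by simp)
        ⟨h1, h4, h3⟩ ⟨h1', h4', h3'⟩ this.2
      simp only [node.injEq] at B
      rw [A, B.1, B.2]

theorem word_surj (N : ℕ) : ∀ w : List (Option Bool), w.length ≤ N → VW 0 w →
    ∃ t : BT, t ≠ nil ∧ t.Good ∧ t.word = w := by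
  induction N with
  | zero =>
    intro w hl hv
    have : w = [] := by simpa using hl
    subst this
    exact ⟨node nil nil, by simp, by simp [Good, Ok], by simp [word]⟩
  | succ N ih =>
    intro w hl hv
    match w with
    | [] => exact ⟨node nil nil, by simp, by simp [Good, Ok], by simp [word]⟩
    | some false :: w => exact absurd hv (by simp [VW])
    | none :: w =>
      obtain ⟨t, h1, h2, h3⟩ := ih w (by simpa using hl) hv
      cases t with
      | nil => exact absurd rfl h1
      | node l r => exact ⟨node nil (node l r), by simp, ⟨trivial, h2, trivial⟩, by rw [word, h3]⟩
    | some true :: w =>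
      obtain ⟨a, b, rfl, ha, hb⟩ := vw_split _ w 0 le_rfl hv
      obtain ⟨t, h1, h2, h3⟩ := ih a (by simp at hl; omega) ha
      obtain ⟨s, g1, g2, g3⟩ := ih b (by simp at hl; omega) hb
      cases s with
      | nil => exact absurd rfl g1
      | node l r =>
        exact ⟨node (node l t) r, by simp, ⟨⟨g2.1, h2, g2.2.2⟩, g2.2.1, h1⟩, by rw [word, h3, g3]⟩

/-- The permutation (of the interval starting at `k`) of a tree. -/
def perm : BT → ℕ → List ℕ
  | nil, _ => []
  | node l r, k => l.perm (k + r.size) ++ (k + r.size + l.size) :: r.perm k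

theorem perm_length (t : BT) : ∀ k, (t.perm k).length = t.size := by
  induction t with
  | nil => intro k; rfl
  | node l r hl hr => intro k; simp [perm, size, hl, hr]; omega

theorem perm_mem (t : BT) : ∀ k x, x ∈ t.perm k ↔ k ≤ x ∧ x < k + t.size := by
  induction t with
  | nil => intro k; simp [perm, size]
  | node l r hl hr => intro k x; simp [perm, size, hl, hr]; omega

theorem perm_nodup (t : BT) : ∀ k, (t.perm k).Nodup := by
  induction t with
  | nil => intro k; simp [perm]
  | node l r hl hr =>
    intro k
    simp only [perm, List.nodup_append, List.nodup_cons, hl, hr, List.mem_cons, perm_mem]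
    refine ⟨trivial, ⟨by omega, trivial⟩, ?_⟩
    intro a ha b hb; omega

theorem perm_inj (t : BT) : ∀ t' k, t.perm k = t'.perm k → t = t' := by
  induction t with
  | nil =>
    intro t' k e
    cases t' with
    | nil => rfl
    | node l r => simp [perm] at e
  | node l r hl hr =>
    intro t' k e
    have hs := congrArg List.length e
    rw [perm_length, perm_length] at hs
    cases t' with
    | nil => simp [perm] at e
    | node l' r' =>
      simp only [perm] at e
      simp only [size] at hs
      rw [show k + r'.size + l'.size = k + r.size + l.size by omega] at e
      have h1 : k + r.size + l.size ∉ l.perm (k + r.size) := by rw [perm_mem]; omega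
      have h2 : k + r.size + l.size ∉ r.perm k := by rw [perm_mem]; omega
      have := (List.append_cons_inj_of_notMem h1 h2).1 e
      have e2 := hr r' k this.2.2
      subst e2
      rw [hl l' _ this.1]

end BT

/-! ### Patterns in lists -/

theorem sub2_append (x y : ℕ) (A B : List ℕ) : [x, y].Sublist (A ++ B) ↔
    [x, y].Sublist A ∨ (x ∈ A ∧ y ∈ B) ∨ [x, y].Sublist B := by
  induction A with
  | nil => simp
  | cons a A ih =>
    rw [List.cons_append, List.cons_sublist_cons', ih, List.cons_sublist_cons']
    simp only [List.singleton_sublist, List.mem_append, List.mem_cons]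
    tauto

theorem sub3_append (x y z : ℕ) (A B : List ℕ) : [x, y, z].Sublist (A ++ B) ↔
    [x, y, z].Sublist A ∨ ([x, y].Sublist A ∧ z ∈ B) ∨ (x ∈ A ∧ [y, z].Sublist B) ∨
      [x, y, z].Sublist B := by
  induction A with
  | nil => simp
  | cons a A ih =>
    rw [List.cons_append, List.cons_sublist_cons', ih, List.cons_sublist_cons', sub2_append,
      List.cons_sublist_cons', List.mem_cons]
    generalize [x, y, z].Sublist A = p1
    generalize [x, y].Sublist A = p2
    generalize [y, z].Sublist A = p3
    grind

def Av (l : List ℕ) : Prop := ∀ x y z, [x, y, z].Sublist l → ¬ (x < z ∧ z < y)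
def Hat (l : List ℕ) : Prop := ∀ x y, [x, y].Sublist l → x < y →
  ∃ c, (c < x ∧ [x, c, y].Sublist l) ∨ (x < c ∧ c < y ∧ [c, x, y].Sublist l)
def El (l : List ℕ) : Prop := ∀ x ∈ l,
  ∃ c, (c < x ∧ [x, c].Sublist l) ∨ (x < c ∧ [c, x].Sublist l)

theorem sub2_mem {x y : ℕ} {A : List ℕ} (h : [x, y].Sublist A) : x ∈ A ∧ y ∈ A :=
  ⟨h.subset (by simp), h.subset (by simp)⟩

theorem sub3_mem {x y z : ℕ} {A : List ℕ} (h : [x, y, z].Sublist A) :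
    x ∈ A ∧ y ∈ A ∧ z ∈ A :=
  ⟨h.subset (by simp), h.subset (by simp), h.subset (by simp)⟩

theorem sub2_ac (x y m : ℕ) (A B : List ℕ) : [x, y].Sublist (A ++ m :: B) ↔
    [x, y].Sublist A ∨ (x ∈ A ∧ y = m) ∨ (x ∈ A ∧ y ∈ B) ∨ (x = m ∧ y ∈ B) ∨
      [x, y].Sublist B := by
  rw [sub2_append, List.cons_sublist_cons', List.singleton_sublist, List.mem_cons]
  tauto

theorem sub3_ac (x y z m : ℕ) (A B : List ℕ) : [x, y, z].Sublist (A ++ m :: B) ↔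
    [x, y, z].Sublist A ∨ ([x, y].Sublist A ∧ z = m) ∨ ([x, y].Sublist A ∧ z ∈ B) ∨
    (x ∈ A ∧ y = m ∧ z ∈ B) ∨ (x ∈ A ∧ [y, z].Sublist B) ∨ (x = m ∧ [y, z].Sublist B) ∨
      [x, y, z].Sublist B := by
  rw [sub3_append, List.cons_sublist_cons', List.cons_sublist_cons', List.singleton_sublist,
    List.mem_cons]
  tauto

section
variable {L R : List ℕ} {m : ℕ}

theorem av_iff (hL : ∀ x ∈ L, x < m) (hR : ∀ x ∈ R, x < m)
    (hd : ∀ x ∈ L, ∀ y ∈ R, x ≠ y) :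
    Av (L ++ m :: R) ↔ Av L ∧ Av R ∧ ∀ x ∈ L, ∀ y ∈ R, y < x := by
  constructor
  · intro h
    refine ⟨fun x y z hs => h x y z ((sub3_ac ..).2 (.inl hs)), fun x y z hs => h x y z
      ((sub3_ac ..).2 (by tauto)), fun x hx y hy => ?_⟩
    have := h x m y ((sub3_ac ..).2 (by tauto))
    have := hR y hy
    have := hd x hx y hy
    omega
  · rintro ⟨h1, h2, h3⟩ x y z hs ⟨hxz, hzy⟩
    rcases (sub3_ac ..).1 hs with h | ⟨h, h'⟩ | ⟨h, h'⟩ | ⟨h, h', h''⟩ | ⟨h, h'⟩ | ⟨h, h'⟩ | h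
    · exact h1 _ _ _ h ⟨hxz, hzy⟩
    · have := hL _ (sub2_mem h).2; omega
    · have := h3 _ (sub2_mem h).1 _ h'; omega
    · have := h3 _ h _ h''; omega
    · have := h3 _ h _ (sub2_mem h').2; omega
    · have := hR _ (sub2_mem h').2; omega
    · exact h2 _ _ _ h ⟨hxz, hzy⟩

theorem hat_iff (hL : ∀ x ∈ L, x < m) (hR : ∀ x ∈ R, x < m)
    (hd : ∀ x ∈ L, ∀ y ∈ R, y < x) (hn : (L ++ m :: R).Nodup) :
    Hat (L ++ m :: R) ↔ Hat L ∧ Hat R ∧ El L := by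
  have hd' : ∀ x ∈ L, x ∉ R := fun x hx hx' => by have := hd x hx x hx'; omega
  have hmL : m ∉ L := fun h => by have := hL m h; omega
  have hmR : m ∉ R := fun h => by have := hR m h; omega
  constructor
  · intro h
    refine ⟨fun x y hs hxy => ?_, fun x y hs hxy => ?_, fun x hx => ?_⟩
    · obtain ⟨c, hc⟩ := h x y ((sub2_ac ..).2 (by tauto)) hxy
      refine ⟨c, ?_⟩
      have hx := (sub2_mem hs).1
      have hy := (sub2_mem hs).2
      have := hL _ hy
      have := hd' _ hy
      rcases hc with ⟨h1, h2⟩ | ⟨h1, h1', h2⟩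
      · left; refine ⟨h1, ?_⟩
        rcases (sub3_ac ..).1 h2 with h | ⟨h, h'⟩ | ⟨h, h'⟩ | ⟨h, h', h''⟩ | ⟨h, h'⟩ | ⟨h, h'⟩ | h
        · exact h
        · omega
        · tauto
        · tauto
        · have := sub2_mem h'; tauto
        · have := sub2_mem h'; tauto
        · have := sub3_mem h; tauto
      · right; refine ⟨h1, h1', ?_⟩
        rcases (sub3_ac ..).1 h2 with h | ⟨h, h'⟩ | ⟨h, h'⟩ | ⟨h, h', h''⟩ | ⟨h, h'⟩ | ⟨h, h'⟩ | h
        · exact h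
        · omega
        · tauto
        · tauto
        · have := sub2_mem h'; tauto
        · have := sub2_mem h'; tauto
        · have := sub3_mem h; tauto
    · obtain ⟨c, hc⟩ := h x y ((sub2_ac ..).2 (by tauto)) hxy
      refine ⟨c, ?_⟩
      have hx := (sub2_mem hs).1
      have hy := (sub2_mem hs).2
      have := hR _ hx
      have := hR _ hy
      have hxL : x ∉ L := fun h => hd' _ h hx
      have hyL : y ∉ L := fun h => hd' _ h hy
      rcases hc with ⟨h1, h2⟩ | ⟨h1, h1', h2⟩
      · left; refine ⟨h1, ?_⟩
        rcases (sub3_ac ..).1 h2 with h | ⟨h, h'⟩ | ⟨h, h'⟩ | ⟨h, h', h''⟩ | ⟨h, h'⟩ | ⟨h, h'⟩ | h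
        · exact absurd (sub3_mem h).1 hxL
        · omega
        · exact absurd (sub2_mem h).1 hxL
        · tauto
        · tauto
        · omega
        · exact h
      · right; refine ⟨h1, h1', ?_⟩
        rcases (sub3_ac ..).1 h2 with h | ⟨h, h'⟩ | ⟨h, h'⟩ | ⟨h, h', h''⟩ | ⟨h, h'⟩ | ⟨h, h'⟩ | h
        · exact absurd (sub3_mem h).2.1 hxL
        · omega
        · exact absurd (sub2_mem h).2 hxL
        · omega
        · have := hd _ h _ hy; omega
        · omega
        · exact h
    · obtain ⟨c, hc⟩ := h x m ((sub2_ac ..).2 (by tauto)) (hL x hx)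
      refine ⟨c, ?_⟩
      have := hL _ hx
      rcases hc with ⟨h1, h2⟩ | ⟨h1, h1', h2⟩
      · left; refine ⟨h1, ?_⟩
        rcases (sub3_ac ..).1 h2 with h | ⟨h, h'⟩ | ⟨h, h'⟩ | ⟨h, h', h''⟩ | ⟨h, h'⟩ | ⟨h, h'⟩ | h
        · exact absurd (sub3_mem h).2.2 hmL
        · exact h
        · tauto
        · tauto
        · have := sub2_mem h'; tauto
        · omega
        · have := sub3_mem h; tauto
      · right; refine ⟨h1, ?_⟩
        rcases (sub3_ac ..).1 h2 with h | ⟨h, h'⟩ | ⟨h, h'⟩ | ⟨h, h', h''⟩ | ⟨h, h'⟩ | ⟨h, h'⟩ | h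
        · exact absurd (sub3_mem h).2.2 hmL
        · exact h
        · tauto
        · tauto
        · have := sub2_mem h'; tauto
        · omega
        · have := sub3_mem h; tauto
  · rintro ⟨h1, h2, h3⟩ x y hs hxy
    rcases (sub2_ac ..).1 hs with h | ⟨h, h'⟩ | ⟨h, h'⟩ | ⟨h, h'⟩ | h
    · obtain ⟨c, hc⟩ := h1 x y h hxy
      exact ⟨c, hc.imp (fun ⟨a, b⟩ => ⟨a, (sub3_ac ..).2 (by simp only [*]; simp)⟩)
        (fun ⟨a, a', b⟩ => ⟨a, a', (sub3_ac ..).2 (by simp only [*]; simp)⟩)⟩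
    · subst h'
      obtain ⟨c, hc⟩ := h3 x h
      exact ⟨c, hc.imp (fun ⟨a, b⟩ => ⟨a, (sub3_ac ..).2 (by simp only [*]; simp)⟩)
        (fun ⟨a, b⟩ => ⟨a, hL _ (sub2_mem b).1, (sub3_ac ..).2 (by simp only [*]; simp)⟩)⟩
    · have := hd _ h _ h'; omega
    · have := hR _ h'; omega
    · obtain ⟨c, hc⟩ := h2 x y h hxy
      exact ⟨c, hc.imp (fun ⟨a, b⟩ => ⟨a, (sub3_ac ..).2 (by simp only [*]; simp)⟩)
        (fun ⟨a, a', b⟩ => ⟨a, a', (sub3_ac ..).2 (by simp only [*]; simp)⟩)⟩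

theorem el_iff (hL : ∀ x ∈ L, x < m) (hR : ∀ x ∈ R, x < m)
    (hd : ∀ x ∈ L, ∀ y ∈ R, y < x) :
    El (L ++ m :: R) ↔ R ≠ [] := by
  have hmL : m ∉ L := fun h => by have := hL m h; omega
  constructor
  · rintro h rfl
    obtain ⟨c, hc⟩ := h m (by simp)
    rcases hc with ⟨h1, h2⟩ | ⟨h1, h2⟩
    · rcases (sub2_ac ..).1 h2 with h | ⟨h, h'⟩ | ⟨h, h'⟩ | ⟨h, h'⟩ | h
      · exact hmL (sub2_mem h).1
      · exact hmL h
      all_goals simp at *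
    · have := (sub2_mem h2).1
      simp at this
      rcases this with h | h
      · have := hL _ h; omega
      · omega
  · intro h x hx
    obtain ⟨r, hr⟩ := List.exists_mem_of_ne_nil R h
    simp only [List.mem_append, List.mem_cons] at hx
    rcases hx with hx | hx | hx
    · exact ⟨r, .inl ⟨hd _ hx _ hr, (sub2_ac ..).2 (by tauto)⟩⟩
    · subst hx
      exact ⟨r, .inl ⟨hR _ hr, (sub2_ac ..).2 (by tauto)⟩⟩
    · exact ⟨m, .inr ⟨hR _ hx, (sub2_ac ..).2 (by tauto)⟩⟩

end

namespace BT

theorem perm_el (t : BT) (k : ℕ) : El (t.perm k) ↔ t.Ok := by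
  cases t with
  | nil => simp [perm, Ok, El]
  | node l r =>
    rw [perm, el_iff, Ok]
    · cases r <;> simp [perm]
    all_goals simp only [perm_mem]; intros; omega

theorem perm_av (t : BT) : ∀ k, Av (t.perm k) := by
  induction t with
  | nil => intro k; simp [perm, Av]
  | node l r hl hr =>
    intro k
    rw [perm, av_iff]
    · refine ⟨hl _, hr _, ?_⟩
      simp only [perm_mem]; intros; omega
    all_goals simp only [perm_mem]; intros; omega

theorem perm_hat (t : BT) : ∀ k, Hat (t.perm k) ↔ t.Good := by
  induction t with
  | nil => intro k; simp [perm, Hat, Good]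
  | node l r hl hr =>
    intro k
    have hn := perm_nodup (node l r) k
    rw [perm] at hn ⊢
    rw [hat_iff _ _ _ hn, hl, hr, perm_el, Good]
    all_goals simp only [perm_mem]; intros; omega

theorem low_set (A B : Finset ℕ) (k n : ℕ) (hu : ∀ x, (x ∈ A ∨ x ∈ B) ↔ k ≤ x ∧ x < k + n)
    (hd : ∀ x ∈ A, ∀ y ∈ B, y < x) (x : ℕ) : x ∈ B ↔ k ≤ x ∧ x < k + B.card := by
  constructor
  · intro hx
    have hk := (hu x).1 (.inr hx)
    have : Finset.Ico k (x + 1) ⊆ B := by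
      intro y hy
      rw [Finset.mem_Ico] at hy
      rcases (hu y).2 ⟨hy.1, by omega⟩ with h | h
      · have := hd _ h _ hx; omega
      · exact h
    have := Finset.card_le_card this
    rw [Nat.card_Ico] at this
    omega
  · rintro ⟨h1, h2⟩
    by_contra hx
    have : B ⊆ Finset.Ico k x := by
      intro y hy
      have hy' := (hu y).1 (.inr hy)
      rw [Finset.mem_Ico]
      refine ⟨hy'.1, ?_⟩
      by_contra hxy
      rcases (hu x).2 ⟨h1, by omega⟩ with h | h
      · have := hd _ h _ hy; omega
      · exact hx h
    have := Finset.card_le_card this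
    rw [Nat.card_Ico] at this
    omega

theorem perm_surj (N : ℕ) : ∀ (l : List ℕ) (k : ℕ), l.length ≤ N → l.Nodup →
    (∀ x, x ∈ l ↔ k ≤ x ∧ x < k + l.length) → Av l → ∃ t : BT, t.perm k = l := by
  induction N with
  | zero =>
    intro l k hl _ _ _
    exact ⟨nil, by have : l = [] := by simpa using hl
                   rw [this, perm]⟩
  | succ N ih =>
    intro l k hl hn hm ha
    rcases Nat.eq_zero_or_pos l.length with h0 | h0
    · exact ⟨nil, by have : l = [] := by simpa using h0
                     rw [this, perm]⟩
    obtain ⟨L, R, hLR⟩ := List.append_of_mem ((hm (k + l.length - 1)).2 (by omega))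
    generalize hmx : k + l.length - 1 = m at hLR
    subst hLR
    simp only [List.length_append, List.length_cons] at hl h0 hm hmx
    have hn' := hn
    rw [List.nodup_append, List.nodup_cons] at hn'
    obtain ⟨nL, ⟨mR, nR⟩, dLR⟩ := hn'
    have hL : ∀ x ∈ L, x < m := by
      intro x hx
      have h1 := (hm x).1 (by simp [hx])
      have h2 := dLR x hx m (by simp)
      omega
    have hR : ∀ x ∈ R, x < m := by
      intro x hx
      have h1 := (hm x).1 (by simp [hx])
      have h2 : x ≠ m := fun h => mR (h ▸ hx)
      omega
    rw [av_iff hL hR (fun x hx y hy => dLR x hx y (by simp [hy]))] at ha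
    obtain ⟨aL, aR, hd⟩ := ha
    have hu : ∀ x, (x ∈ L ∨ x ∈ R) ↔ k ≤ x ∧ x < k + (L.length + R.length) := by
      intro x
      have h1 := hm x
      simp only [List.mem_append, List.mem_cons] at h1
      constructor
      · intro h
        have h2 : x < m := h.elim (hL x) (hR x)
        have := h1.1 (by tauto)
        omega
      · intro h
        have := h1.2 (by omega)
        rcases this with h | h | h
        · exact .inl h
        · omega
        · exact .inr h
    have memR : ∀ x, x ∈ R ↔ k ≤ x ∧ x < k + R.length := by
      intro x
      have := low_set L.toFinset R.toFinset k (L.length + R.length) (by simpa using hu)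
        (by simpa using hd) x
      rwa [List.mem_toFinset, List.toFinset_card_of_nodup nR] at this
    have memL : ∀ x, x ∈ L ↔ k + R.length ≤ x ∧ x < k + R.length + L.length := by
      intro x
      have h1 := hu x
      have h2 := memR x
      have h3 : x ∈ L → x ∉ R := fun h h' => by have := hd _ h _ h'; omega
      constructor
      · intro h
        have := h3 h
        rw [h2] at this
        have := h1.1 (.inl h)
        omega
      · intro h
        rcases h1.2 (by omega) with h' | h'
        · exact h'
        · have := h2.1 h'; omega
    obtain ⟨r, hr⟩ := ih R k (by omega) nR memR aR
    obtain ⟨l, hl'⟩ := ih L (k + R.length) (by omega) nL memL aL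
    have sr : r.size = R.length := by rw [← perm_length r k, hr]
    have sl : l.size = L.length := by rw [← perm_length l _, hl']
    refine ⟨node l r, ?_⟩
    rw [perm, hr, sr, hl', sl]
    congr 2
    omega

end BT

/-! ### From permutations to lists -/

theorem sub2_ofFn {n : ℕ} (f : Fin n → ℕ) (x y : ℕ) : [x, y].Sublist (List.ofFn f) ↔
    ∃ i j : Fin n, i < j ∧ f i = x ∧ f j = y := by
  induction n with
  | zero => simp
  | succ n ih =>
    rw [List.ofFn_succ, List.cons_sublist_cons', ih, List.singleton_sublist, List.mem_ofFn]
    simp only [Fin.exists_fin_succ, Fin.succ_lt_succ_iff, Fin.succ_pos, Fin.not_lt_zero]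
    simp
    constructor
    · rintro (⟨i, j, h⟩ | ⟨rfl, j, h⟩)
      · exact .inr ⟨i, j, h⟩
      · exact .inl ⟨rfl, j, h⟩
    · rintro (⟨h', j, h⟩ | ⟨i, j, h⟩)
      · exact .inr ⟨h'.symm, j, h⟩
      · exact .inl ⟨i, j, h⟩

theorem sub3_ofFn {n : ℕ} (f : Fin n → ℕ) (x y z : ℕ) : [x, y, z].Sublist (List.ofFn f) ↔
    ∃ i j k : Fin n, i < j ∧ j < k ∧ f i = x ∧ f j = y ∧ f k = z := by
  induction n with
  | zero => simp
  | succ n ih =>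
    rw [List.ofFn_succ, List.cons_sublist_cons', ih, sub2_ofFn]
    constructor
    · rintro (⟨i, j, k, h1, h2, h⟩ | ⟨rfl, j, k, h1, h⟩)
      · exact ⟨i.succ, j.succ, k.succ, by simpa, by simpa, h⟩
      · exact ⟨0, j.succ, k.succ, by simp, by simpa, rfl, h⟩
    · rintro ⟨i, j, k, h1, h2, rfl, rfl, rfl⟩
      have hj : j ≠ 0 := Fin.ne_zero_of_lt h1
      have hk : k ≠ 0 := Fin.ne_zero_of_lt h2
      obtain ⟨j, rfl⟩ := Fin.exists_succ_eq.2 hj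
      obtain ⟨k, rfl⟩ := Fin.exists_succ_eq.2 hk
      rw [Fin.succ_lt_succ_iff] at h2
      by_cases hi : i = 0
      · subst hi
        exact .inr ⟨rfl, j, k, h2, rfl, rfl⟩
      · obtain ⟨i, rfl⟩ := Fin.exists_succ_eq.2 hi
        rw [Fin.succ_lt_succ_iff] at h1
        exact .inl ⟨i, j, k, h1, h2, rfl, rfl, rfl⟩

def plist {n : ℕ} (π : Equiv.Perm (Fin n)) : List ℕ := List.ofFn (fun i => (π i : ℕ))

theorem av_plist {n : ℕ} (π : Equiv.Perm (Fin n)) : Avoids132 π ↔ Av (plist π) := by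
  constructor
  · intro h x y z hs hxy
    obtain ⟨i, j, k, h1, h2, rfl, rfl, rfl⟩ := (sub3_ofFn ..).1 hs
    exact h ⟨i, j, k, h1, h2, hxy.1, hxy.2⟩
  · rintro h ⟨i, j, k, h1, h2, h3, h4⟩
    exact h _ _ _ ((sub3_ofFn ..).2 ⟨i, j, k, h1, h2, rfl, rfl, rfl⟩) ⟨h3, h4⟩

theorem hat_perm {n : ℕ} (π : Equiv.Perm (Fin n)) :
    AvoidsHat (Equiv.swap (0 : Fin 3) 1) 1 π ↔ ∀ i j : Fin n, i < j → π i < π j →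
      ∃ c, (i < c ∧ c < j ∧ π c < π i) ∨ (c < i ∧ π i < π c ∧ π c < π j) := by
  have s0 : (Equiv.swap (0 : Fin 3) 1) 0 = 1 := by decide
  have s1 : (Equiv.swap (0 : Fin 3) 1) 1 = 0 := by decide
  have s2 : (Equiv.swap (0 : Fin 3) 1) 2 = 2 := by decide
  have t0 : (1 : Fin 3).succAbove (0 : Fin 2) = 0 := by decide
  have t1 : (1 : Fin 3).succAbove (1 : Fin 2) = 2 := by decide
  constructor
  · intro H i j hij hp
    obtain ⟨h, ⟨hm, ho⟩, hr⟩ := H ![i, j] (by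
      intro a b hab
      fin_cases a <;> fin_cases b <;> simp_all) (by
      intro a b
      fin_cases a <;> fin_cases b <;> simp [s0, s1, s2, t0, t1, hp, hp.le])
    obtain ⟨a, ha⟩ := hr ⟨0, rfl⟩
    obtain ⟨b, hb⟩ := hr ⟨1, rfl⟩
    simp at ha hb
    subst ha hb
    have o01 := ho 1 0
    have o02 := ho 0 2
    have l01 : h 0 < h 1 := hm (by decide)
    have l12 : h 1 < h 2 := hm (by decide)
    rw [s0, s1] at o01
    rw [s0, s2] at o02
    have o01 := o01.1 (by decide)
    have o02 := o02.1 (by decide)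
    have hab := hm.lt_iff_lt.1 hij
    have : (a = 0 ∧ b = 1) ∨ (a = 0 ∧ b = 2) ∨ (a = 1 ∧ b = 2) := by
      clear hr hp hij; revert a b; decide
    rcases this with ⟨rfl, rfl⟩ | ⟨rfl, rfl⟩ | ⟨rfl, rfl⟩
    · exact absurd hp o01.not_gt
    · exact ⟨h 1, .inl ⟨l01, l12, o01⟩⟩
    · exact ⟨h 0, .inr ⟨l01, o01, o02⟩⟩
  · intro H g hg ho
    have g01 : g 0 < g 1 := hg (by decide)
    have p01 : π (g 0) < π (g 1) := (ho 0 1).1 (by rw [t0, t1, s0, s2]; decide)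
    have mk : ∀ a b c : Fin n, a < b → b < c → π b < π a → π a < π c →
        IsOcc (Equiv.swap (0 : Fin 3) 1) π ![a, b, c] := by
      intro a b c h1 h2 h3 h4
      constructor
      · intro x y hxy
        fin_cases x <;> fin_cases y <;> simp_all
        exact h1.trans h2
      · intro x y
        have h5 := h3.trans h4
        fin_cases x <;> fin_cases y <;> simp [s0, s1, s2, h3, h4, h3.le, h4.le, h5, h5.le]
    obtain ⟨c, ⟨h1, h2, h3⟩ | ⟨h1, h2, h3⟩⟩ := H _ _ g01 p01
    · refine ⟨_, mk _ _ _ h1 h2 h3 p01, ?_⟩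
      rintro _ ⟨x, rfl⟩
      fin_cases x
      · exact ⟨0, rfl⟩
      · exact ⟨2, rfl⟩
    · refine ⟨_, mk _ _ _ h1 g01 h2 h3, ?_⟩
      rintro _ ⟨x, rfl⟩
      fin_cases x
      · exact ⟨1, rfl⟩
      · exact ⟨2, rfl⟩

theorem hat_plist {n : ℕ} (π : Equiv.Perm (Fin n)) :
    AvoidsHat (Equiv.swap (0 : Fin 3) 1) 1 π ↔ Hat (plist π) := by
  rw [hat_perm]
  have inj : ∀ a b : Fin n, (π a : ℕ) = π b → a = b := fun a b h => π.injective (Fin.ext h)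
  constructor
  · intro h x y hs hxy
    obtain ⟨i, j, h1, rfl, rfl⟩ := (sub2_ofFn ..).1 hs
    obtain ⟨c, ⟨a1, a2, a3⟩ | ⟨a1, a2, a3⟩⟩ := h i j h1 hxy
    · exact ⟨π c, .inl ⟨a3, (sub3_ofFn ..).2 ⟨i, c, j, a1, a2, rfl, rfl, rfl⟩⟩⟩
    · exact ⟨π c, .inr ⟨a2, a3, (sub3_ofFn ..).2 ⟨c, i, j, a1, h1, rfl, rfl, rfl⟩⟩⟩
  · intro h i j hij hp
    obtain ⟨c, ⟨a1, a2⟩ | ⟨a1, a2, a3⟩⟩ := h _ _ ((sub2_ofFn ..).2 ⟨i, j, hij, rfl, rfl⟩) hp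
    · obtain ⟨i', c', j', b1, b2, e1, rfl, e3⟩ := (sub3_ofFn ..).1 a2
      rw [inj _ _ e1] at b1
      rw [inj _ _ e3] at b2
      exact ⟨c', .inl ⟨b1, b2, a1⟩⟩
    · obtain ⟨c', i', j', b1, b2, rfl, e2, e3⟩ := (sub3_ofFn ..).1 a3
      rw [inj _ _ e2] at b1
      exact ⟨c', .inr ⟨b1, a1, a2⟩⟩

theorem plist_inj {n : ℕ} (π σ : Equiv.Perm (Fin n)) (h : plist π = plist σ) : π = σ := by
  have := List.ofFn_injective h
  ext i
  exact congrFun this i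

theorem plist_nodup {n : ℕ} (π : Equiv.Perm (Fin n)) : (plist π).Nodup :=
  List.nodup_ofFn_ofInjective (fun _ _ h => π.injective (Fin.ext h))

theorem plist_length {n : ℕ} (π : Equiv.Perm (Fin n)) : (plist π).length = n := by
  simp [plist]

theorem plist_mem {n : ℕ} (π : Equiv.Perm (Fin n)) (x : ℕ) : x ∈ plist π ↔ x < n := by
  rw [plist, List.mem_ofFn]
  constructor
  · rintro ⟨i, rfl⟩; exact (π i).2
  · intro h; exact ⟨π.symm ⟨x, h⟩, by simp⟩

theorem plist_surj {n : ℕ} (l : List ℕ) (hl : l.length = n) (hn : l.Nodup)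
    (hm : ∀ x ∈ l, x < n) : ∃ π : Equiv.Perm (Fin n), plist π = l := by
  subst hl
  let f : Fin l.length → Fin l.length := fun i => ⟨l[i], hm _ (List.getElem_mem _)⟩
  have hf : Function.Injective f := by
    intro i j h
    have : l[i] = l[j] := congrArg Fin.val h
    exact Fin.ext ((hn.getElem_inj_iff).1 this)
  refine ⟨Equiv.ofBijective f (Finite.injective_iff_bijective.1 hf), ?_⟩
  simp [plist, f]

/-- Good trees with `n + 1` nodes. -/
abbrev GT (n : ℕ) := {t : BT // t.Good ∧ t.size = n + 1}

theorem GT.ne {n : ℕ} (t : GT n) : t.1 ≠ BT.nil := by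
  intro h
  have := t.2.2
  rw [h] at this
  simp [BT.size] at this

theorem equiv_words (n : ℕ) : Nonempty (GT n ≃ {w : List (Option Bool) // IsMotzkinWord n w}) := by
  refine ⟨Equiv.ofBijective (fun t => ⟨t.1.word, ?_⟩) ⟨?_, ?_⟩⟩
  · have := BT.word_spec _ t.1 le_rfl t.ne t.2.1
    rw [motz_iff]
    exact ⟨by have := t.2.2; omega, this.1⟩
  · intro t t' h
    exact Subtype.ext (BT.word_inj _ t.1 t'.1 le_rfl t.ne t'.ne t.2.1 t'.2.1 (Subtype.mk.inj h))
  · rintro ⟨w, hw⟩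
    have hw' := (motz_iff n w).1 hw
    obtain ⟨t, h1, h2, h3⟩ := BT.word_surj _ w le_rfl hw'.2
    have := BT.word_spec _ t le_rfl h1 h2
    exact ⟨⟨t, h2, by rw [← this.2, h3, hw'.1]⟩, Subtype.ext h3⟩

theorem equiv_perms (n : ℕ) : Nonempty ({π : Equiv.Perm (Fin (n + 1)) //
        Avoids132 π ∧ AvoidsHat (Equiv.swap (0 : Fin 3) 1) 1 π} ≃ GT n) := by
  have H : ∀ π : {π : Equiv.Perm (Fin (n + 1)) //
        Avoids132 π ∧ AvoidsHat (Equiv.swap (0 : Fin 3) 1) 1 π},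
        ∃ t : GT n, t.1.perm 0 = plist π.1 := by
    rintro ⟨π, h1, h2⟩
    rw [av_plist] at h1
    rw [hat_plist] at h2
    obtain ⟨t, ht⟩ := BT.perm_surj _ (plist π) 0 le_rfl (plist_nodup π)
      (by intro x; rw [plist_mem, plist_length]; omega) h1
    refine ⟨⟨t, ?_, ?_⟩, ht⟩
    · rw [← BT.perm_hat t 0, ht]; exact h2
    · rw [← BT.perm_length t 0, ht, plist_length]
  choose F hF using H
  refine ⟨Equiv.ofBijective F ⟨?_, ?_⟩⟩
  · intro π σ h
    have := hF π
    rw [h, hF σ] at this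
    exact Subtype.ext (plist_inj _ _ this.symm)
  · rintro ⟨t, h1, h2⟩
    obtain ⟨π, hπ⟩ := plist_surj (n := n + 1) (t.perm 0) (by rw [BT.perm_length, h2])
      (BT.perm_nodup t 0) (by intro x; rw [BT.perm_mem, h2]; omega)
    refine ⟨⟨π, ?_, ?_⟩, ?_⟩
    · rw [av_plist, hπ]; exact BT.perm_av t 0
    · rw [hat_plist, hπ, BT.perm_hat]; exact h1
    · apply Subtype.ext
      apply BT.perm_inj _ _ 0
      rw [hF, hπ]

/-- Theorem `mot`. For every `n ≥ 0`, the number of Motzkin `n`-paths equals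
the number of permutations of length `n + 1` avoiding `132` and the hatted pattern `21̂3`
(the pattern `213`, i.e. `Equiv.swap 0 1` in 0-indexed notation, with the entry `1` marked);
indeed there is a bijection between the two sets. -/
theorem stmt17 (n : ℕ) :
    Nat.card {w : List (Option Bool) | IsMotzkinWord n w}
      = Nat.card {π : Equiv.Perm (Fin (n + 1)) |
          Avoids132 π ∧ AvoidsHat (Equiv.swap (0 : Fin 3) 1) 1 π} ∧
    Nonempty ({w : List (Option Bool) // IsMotzkinWord n w} ≃
      {π : Equiv.Perm (Fin (n + 1)) //
        Avoids132 π ∧ AvoidsHat (Equiv.swap (0 : Fin 3) 1) 1 π}) := by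
  obtain ⟨e⟩ := equiv_words n
  obtain ⟨e'⟩ := equiv_perms n
  have E := e.symm.trans e'.symm
  exact ⟨Nat.card_congr E, ⟨E⟩⟩
end

section
/- Consider the generating tree on the permutations avoiding 132 and containing no factor a(a+1): for such a permutation π of length n+1, call a site s ∈ {1, …, n+2} active if the permutation π^{↓s} obtained by inserting the value n+2 into position s of π again avoids 132 and contains no factor a(a+1). Then: (1) the leftmost site s = 1 is always active; (2) if π has exactly k active sites s_1 = 1 < s_2 < ⋯ < s_k, then π^{↓s_1} has exactly k+1 active sites, and for each u with 2 ≤ u ≤ k, π^{↓s_u} has exactly k−u+1 active sites. Consequently a node of the tree with label k (its number of active sites) produces children with labels (k+1), (k−1), (k−2), …, 2, 1, which is the Motzkin succession rule (Ω). -/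
/-- The list `l` (one-line notation) avoids the pattern 132. -/
def Av132L (l : List ℕ) : Prop :=
  ¬ ∃ a b c : Fin l.length, a < b ∧ b < c ∧ l.get a < l.get c ∧ l.get c < l.get b

/-- The list `l` contains no factor `a(a+1)`: no two adjacent consecutive numbers. -/
def NoAdjFactor (l : List ℕ) : Prop :=
  ∀ (i : ℕ) (h : i + 1 < l.length), l.get ⟨i + 1, h⟩ ≠ l.get ⟨i, by omega⟩ + 1

/-- The class of permutations coding the Motzkin generating tree: avoiding `132` and with no
two adjacent consecutive numbers. -/
def Good (l : List ℕ) : Prop := Av132L l ∧ NoAdjFactor l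

/-- The set of active sites of a permutation `l` of `{1, …, m+1}` (given in one-line notation):
the sites `s ∈ {1, …, m+2}` such that the permutation `l^{↓s}`, obtained by inserting the new
maximal value `m + 2` into the `s`-th site of `l`, again avoids `132` and has no factor
`a(a+1)`. -/
def activeSet (m : ℕ) (l : List ℕ) : Set ℕ :=
  {s | 1 ≤ s ∧ s ≤ m + 2 ∧ Good (l.insertIdx (s - 1) (m + 2))}

/-- Function version of `Good`. -/
def GF (N : ℕ) (f : ℕ → ℕ) : Prop :=
  (∀ a b c, a < b → b < c → c < N → f a < f c → f c < f b → False) ∧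
  ∀ i, i + 1 < N → f (i + 1) ≠ f i + 1

/-- Function version of insertion. -/
def insF (f : ℕ → ℕ) (p x : ℕ) : ℕ → ℕ :=
  fun i => if i < p then f i else if i = p then x else f (i - 1)

/-- Everything before `p` is at least everything from `p` on. -/
def Split (N : ℕ) (f : ℕ → ℕ) (p : ℕ) : Prop :=
  ∀ i j, i < p → p ≤ j → j < N → f j ≤ f i

theorem good_iff (l : List ℕ) : Good l ↔ GF l.length (fun i => l.getD i 0) := by
  unfold Good GF Av132L NoAdjFactor
  constructor
  · rintro ⟨h1, h2⟩
    refine ⟨fun a b c hab hbc hc h3 h4 => h1 ?_, fun i hi => ?_⟩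
    · have ha : a < l.length := by omega
      have hb : b < l.length := by omega
      refine ⟨⟨a, ha⟩, ⟨b, hb⟩, ⟨c, hc⟩, hab, hbc, ?_, ?_⟩ <;> simp_all
    · have := h2 i hi
      have hi' : i < l.length := by omega
      simp_all
  · rintro ⟨h1, h2⟩
    refine ⟨?_, fun i hi => ?_⟩
    · rintro ⟨a, b, c, hab, hbc, h3, h4⟩
      exact h1 a b c hab hbc c.2 (by simpa using h3) (by simpa using h4)
    · have := h2 i hi
      have hi' : i < l.length := by omega
      simp_all

theorem getD_ins (l : List ℕ) (p x : ℕ) (hp : p ≤ l.length) :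
    (fun i => (l.insertIdx p x).getD i 0) = insF (fun i => l.getD i 0) p x := by
  funext i
  simp only [insF, List.getD_eq_getElem?_getD, List.getElem?_insertIdx]
  split_ifs <;> simp_all

theorem key (N p : ℕ) (f : ℕ → ℕ) (hf : GF N f) (hb : ∀ i, i < N → f i ≤ N) (hp : p ≤ N) :
    GF (N + 1) (insF f p (N + 1)) ↔ Split N f p ∧ (0 < p → f (p - 1) ≠ N) := by
  constructor
  · rintro ⟨h1, h2⟩
    refine ⟨fun i j hi hj hjN => ?_, fun h0 h => ?_⟩
    · by_contra hlt
      have := h1 i p (j + 1) hi (by omega) (by omega)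
      have := hb j hjN
      simp only [insF] at *
      grind
    · have := h2 (p - 1) (by omega)
      simp only [insF] at this
      grind
  · rintro ⟨h1, h2⟩
    constructor
    · intro a b c hab hbc hc
      by_cases hcp : c = p
      · have := hb b (by omega)
        simp only [insF]
        grind
      · by_cases hap : a = p
        · have := hb (c - 1) (by omega)
          simp only [insF]
          grind
        · by_cases hbp : b = p
          · have := h1 a (c - 1) (by omega) (by omega) (by omega)
            simp only [insF]
            grind
          · have := hf.1 (if a < p then a else a - 1) (if b < p then b else b - 1)
              (if c < p then c else c - 1) (by grind) (by grind) (by grind)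
            simp only [insF]
            grind
    · intro i hi
      by_cases hip : i = p
      · have := hb i 
        simp only [insF]
        grind
      · by_cases hip' : i + 1 = p
        · have := h2
          simp only [insF]
          grind
        · have := hf.2 (if i < p then i else i - 1) (by grind)
          simp only [insF]
          grind

theorem mem_active (m : ℕ) (l : List ℕ) (hl : l.length = m + 1)
    (hb : ∀ i, i < m + 1 → l.getD i 0 ≤ m + 1) (hg : Good l) (s : ℕ) :
    s ∈ activeSet m l ↔ 1 ≤ s ∧ s ≤ m + 2 ∧ Split (m + 1) (fun i => l.getD i 0) (s - 1) ∧
      (1 < s → l.getD (s - 2) 0 ≠ m + 1) := by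
  have hg' := (good_iff l).1 hg
  rw [hl] at hg'
  unfold activeSet
  simp only [Set.mem_setOf_eq]
  refine and_congr_right fun h1 => and_congr_right fun h2 => ?_
  have hlen : (l.insertIdx (s - 1) (m + 2)).length = m + 2 := by
    rw [List.length_insertIdx_of_le_length (by omega), hl]
  rw [good_iff, hlen, getD_ins l (s - 1) (m + 2) (by omega),
    key (m + 1) (s - 1) _ hg' hb (by omega)]
  have e : s - 1 - 1 = s - 2 := by omega
  have e' : 0 < s - 1 ↔ 1 < s := by omega
  simp only [e, e']

theorem active_ins (n : ℕ) (l : List ℕ) (hl : l.length = n + 1)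
    (hb : ∀ i, i < n + 1 → l.getD i 0 ≤ n + 1) (s : ℕ)
    (hs : s ∈ activeSet n l) :
    activeSet (n + 1) (l.insertIdx (s - 1) (n + 2)) =
      insert 1 ((· + 1) '' {t | s < t ∧ t ≤ n + 2 ∧ Split (n + 1) (fun i => l.getD i 0) (t - 1)}) := by
  have hs1 := hs.1
  have hs2 := hs.2.1
  have hlen : (l.insertIdx (s - 1) (n + 2)).length = n + 2 := by
    rw [List.length_insertIdx_of_le_length (by omega), hl]
  have hget := getD_ins l (s - 1) (n + 2) (by omega)
  have hget' : ∀ i, (l.insertIdx (s - 1) (n + 2)).getD i 0 =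
      insF (fun i => l.getD i 0) (s - 1) (n + 2) i := fun i => congrFun hget i
  generalize hl' : l.insertIdx (s - 1) (n + 2) = l' at *
  have hg : Good l' := hl' ▸ hs.2.2
  have hb' : ∀ i, i < n + 1 + 1 → l'.getD i 0 ≤ n + 1 + 1 := by
    intro i hi
    rw [hget']
    have h1 := hb i
    have h2 := hb (i - 1)
    simp only [insF]
    grind
  have hs3 := hs
  ext q
  rw [mem_active (n + 1) l' hlen hb' hg]
  simp only [Set.mem_insert_iff, Set.mem_image, Set.mem_setOf_eq, hget, hget']
  generalize hfe : (fun i => l.getD i 0) = f at *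
  have hb2 : ∀ i, i < n + 1 → f i ≤ n + 1 := by
    intro i hi; rw [← hfe]; exact hb i hi
  constructor
  · rintro ⟨h1, h2, h3, h4⟩
    by_cases hq : q = 1
    · exact Or.inl hq
    · right
      have hqs : s < q := by
        by_contra hlt
        have := h3 0 (s - 1) (by omega) (by omega) (by omega)
        have := hb2 0 (by omega)
        simp only [insF] at *
        grind
      have hqs' : q ≠ s + 1 := by
        intro h
        have := h4 (by omega)
        simp only [insF] at *
        grind
      refine ⟨q - 1, ⟨by omega, by omega, ?_⟩, by omega⟩
      intro i j hi hj hjN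
      have := h3 (if i < s - 1 then i else i + 1) (j + 1) (by grind) (by omega) (by omega)
      simp only [insF] at *
      grind
  · rintro (rfl | ⟨t, ⟨h1, h2, h3⟩, rfl⟩)
    · exact ⟨le_rfl, by omega, fun i j hi => by omega, fun h => by omega⟩
    · refine ⟨by omega, by omega, ?_, ?_⟩
      · intro i j hi hj hjN
        have a1 := hb2 (j - 1) (by omega)
        have a2 := h3 (if i < s - 1 then i else i - 1) (j - 1)
        simp only [insF]
        grind
      · intro _
        have := hb2 (t - 2) (by omega)
        simp only [insF]
        grind

/-- Let `l` be a permutation of `{1, …, n+1}` avoiding `132` and with no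
factor `a(a+1)`. Then: (1) the leftmost site `s = 1` is always active; (2) if `l` has exactly
`k` active sites, then inserting at site `1` yields a permutation with exactly `k + 1` active
sites, and inserting at the `u`-th active site `s_u` (for `2 ≤ u ≤ k`, where
`u = #{t active : t ≤ s_u}`) yields a permutation with exactly `k − u + 1` active sites. This is
the Motzkin succession rule `(k) ⇝ (k+1)(k−1)(k−2)⋯(2)(1)`. -/
theorem stmt18 (n : ℕ) (l : List ℕ) (hperm : l.Perm (List.range' 1 (n + 1))) (hgood : Good l) :
    1 ∈ activeSet n l ∧
    (activeSet (n + 1) (l.insertIdx 0 (n + 2))).ncard = (activeSet n l).ncard + 1 ∧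
    (∀ s ∈ activeSet n l, 1 < s →
      (activeSet (n + 1) (l.insertIdx (s - 1) (n + 2))).ncard
        = (activeSet n l).ncard - {t ∈ activeSet n l | t ≤ s}.ncard + 1) := by
  have hl : l.length = n + 1 := by simpa using hperm.length_eq
  have hgD : ∀ i (h : i < l.length), l.getD i 0 = l[i] := fun i h => by simp [h]
  have hb : ∀ i, i < n + 1 → l.getD i 0 ≤ n + 1 := by
    intro i hi
    rw [hgD i (by omega)]
    have : l[i] ∈ List.range' 1 (n + 1) := hperm.mem_iff.1 (List.getElem_mem _)
    rw [List.mem_range'_1] at this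
    omega
  have hnd : l.Nodup := hperm.nodup_iff.2 (List.nodup_range')
  have hinj : ∀ i j, i < n + 1 → j < n + 1 → l.getD i 0 = l.getD j 0 → i = j := by
    intro i j hi hj h
    rw [hgD i (by omega), hgD j (by omega)] at h
    exact (hnd.getElem_inj_iff).1 h
  obtain ⟨p, hp, hpN⟩ : ∃ p, p < n + 1 ∧ l.getD p 0 = n + 1 := by
    have : n + 1 ∈ l := hperm.mem_iff.2 (by rw [List.mem_range'_1]; omega)
    obtain ⟨p, hp, h⟩ := List.getElem_of_mem this
    exact ⟨p, by omega, by rw [hgD p hp, h]⟩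
  have hmem := mem_active n l hl hb hgood
  have hins := active_ins n l hl hb
  have hgf := (good_iff l).1 hgood
  rw [hl] at hgf
  have hsucc : Function.Injective (fun x : ℕ => x + 1) := fun a b h => by simpa using h
  have hfin : (activeSet n l).Finite :=
    (Set.finite_Iic (n + 2)).subset fun x hx => hx.2.1
  have hcard : ∀ s, 1 ≤ s → ∀ S : Set ℕ, (∀ t ∈ S, s < t ∧ t ≤ n + 2) →
      (insert 1 ((fun x : ℕ => x + 1) '' S)).ncard = S.ncard + 1 := by
    intro s hs S hS
    have hSf : S.Finite := (Set.finite_Iic (n + 2)).subset fun x hx => (hS x hx).2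
    rw [Set.ncard_insert_of_notMem _ (hSf.image _), Set.ncard_image_of_injective _ hsucc]
    rintro ⟨t, ht, h⟩
    have := (hS t ht).1
    simp only at h
    omega
  have h1 : 1 ∈ activeSet n l :=
    (hmem 1).2 ⟨le_rfl, by omega, fun i j hi => by omega, fun h => by omega⟩
  refine ⟨h1, ?_, ?_⟩
  · have h := hins 1 h1
    simp only [Nat.sub_self] at h
    rw [h, hcard 1 le_rfl _ (fun t ht => ⟨ht.1, ht.2.1⟩)]
    have e : insert 1 {t | 1 < t ∧ t ≤ n + 2 ∧ Split (n + 1) (fun i => l.getD i 0) (t - 1)}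
        = insert (p + 2) (activeSet n l) := by
      ext t
      simp only [Set.mem_insert_iff, Set.mem_setOf_eq, hmem]
      constructor
      · rintro (rfl | ⟨a, b, c⟩)
        · exact Or.inr ⟨le_rfl, by omega, fun i j hi => by omega, fun h => by omega⟩
        · by_cases ht : t = p + 2
          · exact Or.inl ht
          · refine Or.inr ⟨by omega, b, c, fun _ h => ht ?_⟩
            have := hinj (t - 2) p (by omega) hp (by rw [h, hpN])
            omega
      · rintro (rfl | ⟨a, b, c, d⟩)
        · refine Or.inr ⟨by omega, by omega, ?_⟩
          intro i j hi hj hjN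
          have hj1 := hb j hjN
          by_cases hip : i = p
          · subst hip; simp only [hpN]; exact hj1
          · by_contra hlt
            have hne : l.getD j 0 ≠ n + 1 := fun h => by
              have := hinj j p hjN hp (by rw [h, hpN])
              omega
            refine hgf.1 i p j (by omega) (by omega) hjN (by simpa using hlt) ?_
            simp only [hpN]
            omega
        · by_cases ht : t = 1
          · exact Or.inl ht
          · exact Or.inr ⟨by omega, b, c⟩
    have hc := congrArg Set.ncard e
    rw [Set.ncard_insert_of_notMem (by simp)
        ((Set.finite_Iic (n + 2)).subset fun x hx => hx.2.1),
      Set.ncard_insert_of_notMem _ hfin] at hc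
    · omega
    · rw [hmem]
      rintro ⟨_, _, _, h⟩
      exact h (by omega) (by simpa using hpN)
  · intro s hs hs1
    rw [hins s hs, hcard s (by omega) _ (fun t ht => ⟨ht.1, ht.2.1⟩)]
    have e : {t | s < t ∧ t ≤ n + 2 ∧ Split (n + 1) (fun i => l.getD i 0) (t - 1)}
        = activeSet n l \ {t ∈ activeSet n l | t ≤ s} := by
      have hps : p < s - 1 := by
        by_contra hlt
        obtain ⟨_, _, c, _⟩ := (hmem s).1 hs
        have := c 0 p (by omega) (by omega) hp
        have h0 := hb 0 (by omega)
        simp only [hpN] at this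
        have := hinj 0 p (by omega) hp (by omega)
        subst this
        have h2 := (hmem s).1 hs
        omega
      ext t
      simp only [Set.mem_diff, Set.mem_setOf_eq, hmem]
      constructor
      · rintro ⟨a, b, c⟩
        refine ⟨⟨by omega, b, c, fun _ h => ?_⟩, fun h => by omega⟩
        have := hinj (t - 2) p (by omega) hp (by rw [h, hpN])
        omega
      · rintro ⟨⟨a, b, c, d⟩, h⟩
        refine ⟨?_, b, c⟩
        by_contra hlt
        exact h ⟨⟨a, b, c, d⟩, by omega⟩
    rw [e, Set.ncard_diff (fun x hx => hx.1) (hfin.subset fun x hx => hx.1)]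
end
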